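/- Let G be a well-covered graph having no isolated vertices. Then the following are equivalent: (1) G belongs to the class W2; (2) the induced subgraph G[V(G) \ N[v]] belongs to the class W2 for every vertex v ∈ V(G); (3) every vertex of G is a shedding vertex. -/

import Mathlib

open SimpleGraph

/-- A set of vertices is independent if its elements are pairwise nonadjacent. -/
def IsIndep {V : Type*} (G : SimpleGraph V) (S : Set V) : Prop :=
  S.Pairwise fun a b => ¬ G.Adj a b

/-- The closed neighborhood `N[S]` of a set of vertices. -/
def closedNbhd {V : Type*} (G : SimpleGraph V) (S : Set V) : Set V :=
  S ∪ {x | ∃ s ∈ S, G.Adj s x}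

/-- The open neighborhood `N(S) = N[S] \ S` of a set of vertices. -/
def openNbhd {V : Type*} (G : SimpleGraph V) (S : Set V) : Set V :=
  closedNbhd G S \ S

/-- `S` dominates `T` if `T ⊆ N[S]`. -/
def Dominates {V : Type*} (G : SimpleGraph V) (S T : Set V) : Prop :=
  T ⊆ closedNbhd G S

/-- `N₂(v)`: the set of vertices at distance exactly 2 from `v`. -/
def N2 {V : Type*} (G : SimpleGraph V) (v : V) : Set V :=
  {u | u ≠ v ∧ ¬ G.Adj v u ∧ ∃ w, G.Adj v w ∧ G.Adj w u}

/-- A maximal independent set of the subgraph of `G` induced by `A`. -/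
def IsMaximalIndepOn {V : Type*} (G : SimpleGraph V) (A S : Set V) : Prop :=
  S ⊆ A ∧ IsIndep G S ∧ ∀ T, T ⊆ A → IsIndep G T → S ⊆ T → S = T

/-- A maximal independent set of `G`. -/
def IsMaximalIndep {V : Type*} (G : SimpleGraph V) (S : Set V) : Prop :=
  IsMaximalIndepOn G Set.univ S

/-- A maximum independent set of the subgraph of `G` induced by `A`. -/
def IsMaxIndepOn {V : Type*} (G : SimpleGraph V) (A S : Set V) : Prop :=
  S ⊆ A ∧ IsIndep G S ∧ ∀ T, T ⊆ A → IsIndep G T → T.ncard ≤ S.ncard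

/-- A maximum independent set of `G`. -/
def IsMaxIndep {V : Type*} (G : SimpleGraph V) (S : Set V) : Prop :=
  IsMaxIndepOn G Set.univ S

/-- The independence number of the subgraph of `G` induced by `A`. -/
noncomputable def alphaOn {V : Type*} (G : SimpleGraph V) (A : Set V) : ℕ :=
  sSup {n | ∃ S, S ⊆ A ∧ IsIndep G S ∧ S.ncard = n}

/-- The independence number `α(G)`. -/
noncomputable def alpha {V : Type*} (G : SimpleGraph V) : ℕ :=
  alphaOn G Set.univ

/-- The subgraph of `G` induced by `A` is well-covered. -/
def WellCoveredOn {V : Type*} (G : SimpleGraph V) (A : Set V) : Prop :=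
  ∀ S, IsMaximalIndepOn G A S → IsMaxIndepOn G A S

/-- `G` is well-covered: every maximal independent set is maximum. -/
def WellCovered {V : Type*} (G : SimpleGraph V) : Prop :=
  WellCoveredOn G Set.univ

/-- The subgraph of `G` induced by `A` is in the class `W₂`. -/
def W2On {V : Type*} (G : SimpleGraph V) (A : Set V) : Prop :=
  ∀ S₁ S₂ : Set V, S₁ ⊆ A → S₂ ⊆ A → IsIndep G S₁ → IsIndep G S₂ → Disjoint S₁ S₂ →
    ∃ T₁ T₂ : Set V, S₁ ⊆ T₁ ∧ S₂ ⊆ T₂ ∧ IsMaxIndepOn G A T₁ ∧ IsMaxIndepOn G A T₂ ∧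
      Disjoint T₁ T₂

/-- `G` belongs to the class `W₂`: every two pairwise disjoint independent sets are
included in two pairwise disjoint maximum independent sets. -/
def W2 {V : Type*} (G : SimpleGraph V) : Prop :=
  W2On G Set.univ

/-- `v` is a shedding vertex: for every independent set `S ⊆ V(G) \ N[v]` there exists
`u ∈ N(v)` such that `S ∪ {u}` is independent. -/
def Shedding {V : Type*} (G : SimpleGraph V) (v : V) : Prop :=
  ∀ S : Set V, Disjoint S (closedNbhd G {v}) → IsIndep G S →
    ∃ u ∈ G.neighborSet v, IsIndep G (insert u S)

/-- The edge `xy` is relating: there is an independent set `S ⊆ V(G) \ N[{x,y}]` such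
that both `S ∪ {x}` and `S ∪ {y}` are maximal independent sets of `G`. -/
def Relating {V : Type*} (G : SimpleGraph V) (x y : V) : Prop :=
  ∃ S : Set V, IsIndep G S ∧ Disjoint S (closedNbhd G {x, y}) ∧
    IsMaximalIndep G (insert x S) ∧ IsMaximalIndep G (insert y S)

/-- `G` contains no cycle of length `k` (as a subgraph). -/
def CycleFree {V : Type*} (G : SimpleGraph V) (k : ℕ) : Prop :=
  ∀ (u : V) (w : G.Walk u u), w.IsCycle → w.length ≠ k

/-- A vertex is simplicial if its closed neighborhood is a clique. -/
def Simplicial {V : Type*} (G : SimpleGraph V) (v : V) : Prop :=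
  G.IsClique (closedNbhd G {v})

/-! Membership in `W₂` amounts to extending an independent set to a maximum one that avoids a given
disjoint independent set `S`: two such extensions in succession make both members of a pair
maximum. Deleting a vertex `v` from a maximum independent set through `v` leaves a maximum
independent set of `G - N[v]`, so `W₂` passes from `G` to `G - N[v]`. If every `G - N[v]` is in
`W₂` and `S` is independent, nonempty and disjoint from `N[v]`, choose `s ∈ S`; a maximum
independent set of `G - N[s]` that contains `S \ {s}` and avoids `v` dominates `v`, hence contains a
neighbour of `v` that can be added to `S`. Finally, if every vertex is shedding, then an independent
set that is maximal subject to avoiding `S` dominates `S` as well, hence is maximal in `G`, and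
well-coveredness makes it maximum. -/

section

variable {V : Type*} {G : SimpleGraph V} {A B S T : Set V} {v : V}

theorem disjoint_closedNbhd_singleton :
    Disjoint S (closedNbhd G {v}) ↔ v ∉ closedNbhd G S := by
  simp only [closedNbhd, Set.disjoint_left, Set.mem_union, Set.mem_singleton_iff, Set.mem_ofPred_eq,
    exists_eq_left, not_or, not_exists, not_and, G.adj_comm v]
  exact ⟨fun h => ⟨fun hv => (h hv).1 rfl, fun s hs => (h hs).2⟩,
    fun h s hs => ⟨fun hsv => h.1 (hsv ▸ hs), h.2 s hs⟩⟩

theorem IsIndep.mono (hT : IsIndep G T) (hST : S ⊆ T) : IsIndep G S :=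
  Set.Pairwise.mono hST hT

theorem isIndep_insert (hv : v ∉ S) :
    IsIndep G (insert v S) ↔ IsIndep G S ∧ v ∉ closedNbhd G S := by
  have hsymm : Std.Symm fun a b => ¬ G.Adj a b := ⟨fun _ _ h hba => h hba.symm⟩
  rw [IsIndep, Set.pairwise_insert_of_symm_of_notMem hv]
  simp only [IsIndep, closedNbhd, Set.mem_union, Set.mem_ofPred_eq, hv, false_or, not_exists,
    not_and, G.adj_comm v]

theorem IsIndep.insert_of_disjoint_closedNbhd (hS : IsIndep G S)
    (hSv : Disjoint S (closedNbhd G {v})) : IsIndep G (insert v S) := by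
  have hv : v ∉ closedNbhd G S := disjoint_closedNbhd_singleton.1 hSv
  exact (isIndep_insert fun hvS => hv (Or.inl hvS)).2 ⟨hS, hv⟩

theorem IsIndep.disjoint_sdiff_singleton_closedNbhd (hT : IsIndep G T) (hv : v ∈ T) :
    Disjoint (T \ {v}) (closedNbhd G {v}) := by
  have hinsert : IsIndep G (insert v (T \ {v})) := by rwa [Set.insert_sdiff_self_of_mem hv]
  exact disjoint_closedNbhd_singleton.2 ((isIndep_insert fun h => h.2 rfl).1 hinsert).2

theorem isMaximalIndepOn_iff_dominates :
    IsMaximalIndepOn G A T ↔ T ⊆ A ∧ IsIndep G T ∧ Dominates G T A := by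
  refine and_congr_right fun hTA => and_congr_right fun hT => ⟨fun hmax v hvA => ?_, ?_⟩
  · by_contra hv
    have hvT : v ∉ T := fun h => hv (Or.inl h)
    exact hvT (Set.insert_eq_self.1 (hmax _ (Set.insert_subset hvA hTA)
      ((isIndep_insert hvT).2 ⟨hT, hv⟩) (Set.subset_insert v T)).symm)
  · intro hdom U hUA hU hTU
    refine hTU.antisymm fun v hvU => (hdom (hUA hvU)).resolve_right ?_
    rintro ⟨t, htT, htv⟩
    exact hU (hTU htT) hvU htv.ne htv

theorem IsIndep.exists_isMaximalIndepOn (hS : IsIndep G S) (hSA : S ⊆ A) :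
    ∃ T, S ⊆ T ∧ IsMaximalIndepOn G A T := by
  obtain ⟨T, hST, hT⟩ := zorn_subset_nonempty {T | T ⊆ A ∧ IsIndep G T}
    (fun c hc hchain _ => ⟨⋃₀ c,
      ⟨Set.sUnion_subset fun U hU => (hc hU).1,
        (Set.pairwise_sUnion hchain.directedOn).2 fun U hU => (hc hU).2⟩,
      fun U hU => Set.subset_sUnion_of_mem hU⟩) S ⟨hSA, hS⟩
  exact ⟨T, hST, hT.prop.1, hT.prop.2, fun U hUA hU hTU => hT.eq_of_subset ⟨hUA, hU⟩ hTU⟩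

-- An infinite set has `ncard` equal to `0`, which is beaten by any singleton.
theorem IsMaxIndepOn.finite (hT : IsMaxIndepOn G A T) : T.Finite := by
  by_contra hinf
  obtain ⟨t, ht⟩ := Set.Infinite.nonempty hinf
  have hcard := hT.2.2 {t} (Set.singleton_subset_iff.2 (hT.1 ht)) (Set.pairwise_singleton _ _)
  rw [Set.ncard_singleton, Set.Infinite.ncard hinf] at hcard
  omega

theorem IsMaxIndepOn.dominates (hT : IsMaxIndepOn G A T) : Dominates G T A := by
  intro v hvA
  by_contra hv
  have hvT : v ∉ T := fun h => hv (Or.inl h)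
  have hcard := hT.2.2 (insert v T) (Set.insert_subset hvA hT.1)
    ((isIndep_insert hvT).2 ⟨hT.2.1, hv⟩)
  rw [Set.ncard_insert_of_notMem hvT hT.finite] at hcard
  omega

theorem IsMaxIndepOn.sdiff_singleton (hT : IsMaxIndepOn G A T) (hv : v ∈ T) :
    IsMaxIndepOn G (A \ closedNbhd G {v}) (T \ {v}) := by
  have hsub : T \ {v} ⊆ A \ closedNbhd G {v} := Set.subset_sdiff.2
    ⟨Set.sdiff_subset.trans hT.1, hT.2.1.disjoint_sdiff_singleton_closedNbhd hv⟩
  refine ⟨hsub, hT.2.1.mono Set.sdiff_subset, fun U hUA hU => ?_⟩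
  rcases U.finite_or_infinite with hfin | hinf
  · have hvU : v ∉ U := fun h => (hUA h).2 (Or.inl rfl)
    have hcard := hT.2.2 (insert v U)
      (Set.insert_subset (hT.1 hv) (hUA.trans Set.sdiff_subset))
      (hU.insert_of_disjoint_closedNbhd (Set.subset_sdiff.1 hUA).2)
    rw [Set.ncard_insert_of_notMem hvU hfin] at hcard
    rw [Set.ncard_sdiff_singleton_of_mem hv]
    omega
  · simp [hinf.ncard]

theorem w2On_iff_exists_isMaxIndepOn_disjoint :
    W2On G A ↔ ∀ S₁ S₂ : Set V, S₁ ⊆ A → S₂ ⊆ A → IsIndep G S₁ → IsIndep G S₂ →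
      Disjoint S₁ S₂ → ∃ T, S₁ ⊆ T ∧ IsMaxIndepOn G A T ∧ Disjoint T S₂ := by
  constructor
  · intro h S₁ S₂ hS₁A hS₂A hS₁ hS₂ hdisj
    obtain ⟨T₁, T₂, hST₁, hST₂, hT₁, -, hT⟩ := h S₁ S₂ hS₁A hS₂A hS₁ hS₂ hdisj
    exact ⟨T₁, hST₁, hT₁, hT.mono_right hST₂⟩
  · intro h S₁ S₂ hS₁A hS₂A hS₁ hS₂ hdisj
    obtain ⟨T₁, hST₁, hT₁, hT₁S₂⟩ := h S₁ S₂ hS₁A hS₂A hS₁ hS₂ hdisj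
    obtain ⟨T₂, hST₂, hT₂, hT₂T₁⟩ := h S₂ T₁ hS₂A hT₁.1 hS₂ hT₁.2.1 hT₁S₂.symm
    exact ⟨T₁, T₂, hST₁, hST₂, hT₁, hT₂, hT₂T₁.symm⟩

theorem W2On.sdiff_closedNbhd (h : W2On G A) (hvA : v ∈ A) :
    W2On G (A \ closedNbhd G {v}) := by
  rw [w2On_iff_exists_isMaxIndepOn_disjoint] at h ⊢
  intro S₁ S₂ hS₁A hS₂A hS₁ hS₂ hdisj
  have hv : ∀ {S}, S ⊆ A \ closedNbhd G {v} → v ∉ S := fun hS hvS => (hS hvS).2 (Or.inl rfl)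
  obtain ⟨T, hST, hT, hTS₂⟩ := h (insert v S₁) S₂
    (Set.insert_subset hvA (hS₁A.trans Set.sdiff_subset)) (hS₂A.trans Set.sdiff_subset)
    (hS₁.insert_of_disjoint_closedNbhd (Set.subset_sdiff.1 hS₁A).2) hS₂
    (Set.disjoint_insert_left.2 ⟨hv hS₂A, hdisj⟩)
  obtain ⟨hvT, hS₁T⟩ := Set.insert_subset_iff.1 hST
  exact ⟨T \ {v}, Set.subset_sdiff_singleton hS₁T (hv hS₁A), hT.sdiff_singleton hvT,
    hTS₂.mono_left Set.sdiff_subset⟩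

theorem W2On.exists_adj_isIndep_insert (h : W2On G A) (hvA : v ∈ A) (hSA : S ⊆ A)
    (hS : IsIndep G S) (hvS : v ∉ S) : ∃ u ∈ A, G.Adj v u ∧ IsIndep G (insert u S) := by
  obtain ⟨T, hST, hT, hTv⟩ := w2On_iff_exists_isMaxIndepOn_disjoint.1 h S {v} hSA
    (Set.singleton_subset_iff.2 hvA) hS (Set.pairwise_singleton _ _)
    (Set.disjoint_singleton_right.2 hvS)
  obtain ⟨u, huT, huv⟩ := (hT.dominates hvA).resolve_left (Set.disjoint_singleton_right.1 hTv)
  exact ⟨u, hT.1 huT, huv.symm, hT.2.1.mono (Set.insert_subset huT hST)⟩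

theorem shedding_of_forall_w2On_compl_closedNbhd (hv : (G.neighborSet v).Nonempty)
    (h : ∀ s, W2On G (closedNbhd G {s})ᶜ) : Shedding G v := by
  intro S hSv hS
  rcases S.eq_empty_or_nonempty with rfl | ⟨s, hs⟩
  · obtain ⟨u, hu⟩ := hv
    exact ⟨u, hu, by rw [insert_empty_eq]; exact Set.pairwise_singleton _ _⟩
  have hvs : v ∈ (closedNbhd G {s})ᶜ :=
    disjoint_closedNbhd_singleton.1 (hSv.mono_left (Set.singleton_subset_iff.2 hs))
  have hSs : S \ {s} ⊆ (closedNbhd G {s})ᶜ :=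
    Set.subset_compl_iff_disjoint_right.2 (hS.disjoint_sdiff_singleton_closedNbhd hs)
  have hvS : v ∉ S := fun hvS => Set.disjoint_left.1 hSv hvS (Or.inl rfl)
  obtain ⟨u, hus, hvu, hu⟩ := (h s).exists_adj_isIndep_insert hvs hSs (hS.mono Set.sdiff_subset)
    fun hvS' => hvS hvS'.1
  have hindep : IsIndep G (insert s (insert u (S \ {s}))) :=
    hu.insert_of_disjoint_closedNbhd
      (Set.subset_compl_iff_disjoint_right.1 (Set.insert_subset hus hSs))
  rw [Set.insert_comm, Set.insert_sdiff_self_of_mem hs] at hindep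
  exact ⟨u, hvu, hindep⟩

theorem IsMaximalIndepOn.isMaximalIndep_of_shedding (hT : IsMaximalIndepOn G Bᶜ T)
    (hB : IsIndep G B) (hshed : ∀ v ∈ B, Shedding G v) : IsMaximalIndep G T := by
  obtain ⟨-, hTindep, hdom⟩ := isMaximalIndepOn_iff_dominates.1 hT
  refine isMaximalIndepOn_iff_dominates.2 ⟨Set.subset_univ T, hTindep, fun v _ => ?_⟩
  by_contra hv
  have hvB : v ∈ B := by_contra fun hvB => hv (hdom hvB)
  obtain ⟨u, hvu, hu⟩ := hshed v hvB T (disjoint_closedNbhd_singleton.2 hv) hTindep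
  rw [mem_neighborSet] at hvu
  have huB : u ∉ B := fun huB => hB hvB huB hvu.ne hvu
  have huT : u ∉ T := fun huT => hv (Or.inr ⟨u, huT, hvu.symm⟩)
  exact ((isIndep_insert huT).1 hu).2 (hdom huB)

theorem WellCovered.w2_of_forall_shedding (hwc : WellCovered G)
    (hshed : ∀ v, Shedding G v) : W2 G := by
  refine w2On_iff_exists_isMaxIndepOn_disjoint.2 fun S₁ S₂ _ _ hS₁ hS₂ hdisj => ?_
  obtain ⟨T, hST, hT⟩ :=
    hS₁.exists_isMaximalIndepOn (Set.subset_compl_iff_disjoint_right.2 hdisj)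
  exact ⟨T, hST, hwc T (hT.isMaximalIndep_of_shedding hS₂ fun v _ => hshed v),
    Set.subset_compl_iff_disjoint_right.1 hT.1⟩

end

theorem stmt10_general {V : Type*} (G : SimpleGraph V)
    (hwc : WellCovered G) (hiso : ∀ v : V, (G.neighborSet v).Nonempty) :
    (W2 G ↔ ∀ v : V, W2On G (closedNbhd G {v})ᶜ) ∧
    (W2 G ↔ ∀ v : V, Shedding G v) := by
  have w2On_of_w2 (h : W2 G) (v : V) : W2On G (closedNbhd G {v})ᶜ := by
    rw [Set.compl_eq_univ_sdiff]
    exact h.sdiff_closedNbhd (Set.mem_univ v)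
  have shedding_of_w2On (h : ∀ v : V, W2On G (closedNbhd G {v})ᶜ) (v : V) : Shedding G v :=
    shedding_of_forall_w2On_compl_closedNbhd (hiso v) h
  have w2_of_shedding : (∀ v : V, Shedding G v) → W2 G := hwc.w2_of_forall_shedding
  exact ⟨⟨w2On_of_w2, fun h => w2_of_shedding (shedding_of_w2On h)⟩,
    ⟨fun h => shedding_of_w2On (w2On_of_w2 h), w2_of_shedding⟩⟩

/-- For a well-covered graph with no isolated vertices, the following are
equivalent: (1) `G ∈ W₂`; (2) `G[V(G) \ N[v]] ∈ W₂` for every vertex `v`; (3) every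
vertex of `G` is shedding. -/
theorem stmt10 {V : Type*} [Fintype V] (G : SimpleGraph V)
    (hwc : WellCovered G) (hiso : ∀ v : V, (G.neighborSet v).Nonempty) :
    (W2 G ↔ ∀ v : V, W2On G (closedNbhd G {v})ᶜ) ∧
    (W2 G ↔ ∀ v : V, Shedding G v) :=
  stmt10_general G hwc hiso
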